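/- Let a, b be nonzero elements of F. Then there exists an F-algebra homomorphism ♯ : O_q → □_q that sends A ↦ a x₀ + a⁻¹ x₁ and B ↦ b x₂ + b⁻¹ x₃. -/

import Mathlib

/-!
Put `A = x + y` with `x = a x₀`, `y = a⁻¹ x₁`, and `B = z + w` with `z = b x₂`, `w = b⁻¹ x₃`.
The cyclically neighbouring pairs still satisfy `q`-Weyl relations, now with constants
`1, b/a, 1, a/b`, and opposite pairs still satisfy the `q`-Serre relations, which are homogeneous.

The `q`-Serre expression is linear in its second argument, so it suffices to compute
`qSerre q A z` and `qSerre q A w` separately. In the first, the `q`-Weyl relations for `(x, y)` and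
`(y, z)` allow every `y` to be moved to the left of each word; after this the expression is a
multiple of `[z, x + y]` plus `qSerre q x z`, which vanishes. This is `qSerre_add`.
Replacing `q` by `q⁻¹` turns a `q`-Weyl relation for `(u, v)` into one for `(v, u)` and preserves
the `q`-Serre expression, so the same lemma evaluates `qSerre q A w`. The second `q`-Dolan/Grady
relation follows by rotating the four generators by two steps.
-/

noncomputable section

/-- The `q`-Serre expression `u³v − [3]_q u²vu + [3]_q uvu² − vu³`,
where `[3]_q = (q³ − q⁻³)/(q − q⁻¹)`. -/
def qSerre {F : Type*} [Field F] (q : F) {A : Type*} [Ring A] [Algebra F A] (u v : A) : A :=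
  u ^ 3 * v - ((q ^ 3 - q⁻¹ ^ 3) / (q - q⁻¹)) • (u ^ 2 * v * u)
    + ((q ^ 3 - q⁻¹ ^ 3) / (q - q⁻¹)) • (u * v * u ^ 2) - v * u ^ 3
/-- The defining relations (`q`-Dolan/Grady relations) of the `q`-Onsager algebra. -/
inductive OnsagerRel (F : Type*) [Field F] (q : F) :
    FreeAlgebra F (Fin 2) → FreeAlgebra F (Fin 2) → Prop
  | DG1 : OnsagerRel F q (qSerre q (FreeAlgebra.ι F 0) (FreeAlgebra.ι F 1))
      (((q ^ 2 - q⁻¹ ^ 2) ^ 2) •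
        (FreeAlgebra.ι F 1 * FreeAlgebra.ι F 0 - FreeAlgebra.ι F 0 * FreeAlgebra.ι F 1))
  | DG2 : OnsagerRel F q (qSerre q (FreeAlgebra.ι F 1) (FreeAlgebra.ι F 0))
      (((q ^ 2 - q⁻¹ ^ 2) ^ 2) •
        (FreeAlgebra.ι F 0 * FreeAlgebra.ι F 1 - FreeAlgebra.ι F 1 * FreeAlgebra.ι F 0))

/-- The `q`-Onsager algebra `O_q`. -/
abbrev Onsager (F : Type*) [Field F] (q : F) := RingQuot (OnsagerRel F q)

/-- The generator `A` of `O_q`. -/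
def Ag (F : Type*) [Field F] (q : F) : Onsager F q :=
  RingQuot.mkAlgHom F (OnsagerRel F q) (FreeAlgebra.ι F 0)

/-- The generator `B` of `O_q`. -/
def Bg (F : Type*) [Field F] (q : F) : Onsager F q :=
  RingQuot.mkAlgHom F (OnsagerRel F q) (FreeAlgebra.ι F 1)
/-- The defining relations of the algebra `□_q`. -/
inductive BoxRel (F : Type*) [Field F] (q : F) :
    FreeAlgebra F (ZMod 4) → FreeAlgebra F (ZMod 4) → Prop
  | weyl (i : ZMod 4) : BoxRel F q
      ((q - q⁻¹)⁻¹ • (q • (FreeAlgebra.ι F i * FreeAlgebra.ι F (i + 1))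
        - q⁻¹ • (FreeAlgebra.ι F (i + 1) * FreeAlgebra.ι F i))) 1
  | serre (i : ZMod 4) : BoxRel F q (qSerre q (FreeAlgebra.ι F i) (FreeAlgebra.ι F (i + 2))) 0

/-- The algebra `□_q`. -/
abbrev Box (F : Type*) [Field F] (q : F) := RingQuot (BoxRel F q)

/-- The generators `x_i` of `□_q`. -/
def bx (F : Type*) [Field F] (q : F) (i : ZMod 4) : Box F q :=
  RingQuot.mkAlgHom F (BoxRel F q) (FreeAlgebra.ι F i)

/-- The `q`-Weyl relation with constant `c`, free of denominators. It is equivalent to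
`(q u v − q⁻¹ v u)/(q − q⁻¹) = c` when `q² ≠ 1`. -/
def QWeyl {F : Type*} [Field F] (q c : F) {R : Type*} [Ring R] [Algebra F R] (u v : R) : Prop :=
  q • (u * v) - q⁻¹ • (v * u) = ((q - q⁻¹) * c) • (1 : R)

section Algebra

variable {F : Type*} [Field F] {R : Type*} [Ring R] [Algebra F R]

lemma sub_inv_ne_zero_of_sq {q : F} (hq : q ≠ 0) (hq2 : q ^ 2 ≠ 1) : q - q⁻¹ ≠ 0 := by
  intro h
  apply hq2
  field_simp at h
  linear_combination h

lemma three_eq {q : F} (hq : q ≠ 0) (hq2 : q ^ 2 ≠ 1) :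
    (q ^ 3 - q⁻¹ ^ 3) / (q - q⁻¹) = q ^ 2 + 1 + q⁻¹ ^ 2 := by
  rw [div_eq_iff (sub_inv_ne_zero_of_sq hq hq2)]
  field_simp
  ring

lemma QWeyl.symm {q c : F} {u v : R} (h : QWeyl q c u v) : QWeyl q⁻¹ c v u := by
  unfold QWeyl at *
  rw [inv_inv]
  linear_combination (norm := module) (-1 : F) • h

lemma QWeyl.smul {q c : F} {u v : R} (h : QWeyl q c u v) (s t : F) :
    QWeyl q (s * t * c) (s • u) (t • v) := by
  unfold QWeyl at *
  simp only [smul_mul_assoc, mul_smul_comm]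
  linear_combination (norm := module) (s * t) • h

lemma qSerre_smul (q s t : F) (u v : R) :
    qSerre q (s • u) (t • v) = (s ^ 3 * t) • qSerre q u v := by
  simp only [qSerre, pow_succ, pow_zero, one_mul, smul_mul_assoc, mul_smul_comm]
  module

lemma qSerre_add_right (q : F) (u v w : R) :
    qSerre q u (v + w) = qSerre q u v + qSerre q u w := by
  simp only [qSerre, mul_add, add_mul, smul_add]
  abel

lemma qSerre_inv (q : F) (u v : R) : qSerre q⁻¹ u v = qSerre q u v := by
  have : (q⁻¹ ^ 3 - q⁻¹⁻¹ ^ 3) / (q⁻¹ - q⁻¹⁻¹) = (q ^ 3 - q⁻¹ ^ 3) / (q - q⁻¹) := by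
    rw [inv_inv, ← neg_sub (q ^ 3), ← neg_sub q, neg_div_neg_eq]
  simp only [qSerre, this]

/-- The value of the `q`-Serre expression at `x + y` when `y` is `q`-Weyl related to both `x` and
`z`, and `x`, `z` satisfy the `q`-Serre relation. -/
lemma qSerre_add {q c : F} (hq : q ≠ 0) (hq2 : q ^ 2 ≠ 1) {x y z : R}
    (hxy : QWeyl q 1 x y) (hyz : QWeyl q c y z) (hxz : qSerre q x z = 0) :
    qSerre q (x + y) z
      = ((q ^ 2 - q⁻¹ ^ 2) ^ 2) • (z * (x + y) - (x + y) * z) := by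
  unfold QWeyl at hxy hyz
  have e1 : x * y = (q⁻¹ ^ 2) • (y * x) + (1 - q⁻¹ ^ 2) • (1 : R) := by
    linear_combination (norm := skip) q⁻¹ • hxy
    match_scalars <;> field_simp <;> ring
  have e2 : z * y = (q ^ 2) • (y * z) + (c * (1 - q ^ 2)) • (1 : R) := by
    linear_combination (norm := skip) (-q) • hyz
    match_scalars <;> field_simp <;> ring
  have e1' (r : R) : x * (y * r) = (q⁻¹ ^ 2) • (y * (x * r)) + (1 - q⁻¹ ^ 2) • r := by
    rw [← mul_assoc, e1]; simp only [add_mul, smul_mul_assoc, one_mul, mul_assoc]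
  have e2' (r : R) : z * (y * r) = (q ^ 2) • (y * (z * r)) + (c * (1 - q ^ 2)) • r := by
    rw [← mul_assoc, e2]; simp only [add_mul, smul_mul_assoc, one_mul, mul_assoc]
  simp only [qSerre, three_eq hq hq2, pow_three (x + y), pow_three x, sq (x + y), sq x, mul_assoc] at hxz ⊢
  simp only [mul_add, add_mul, e1, e1', e2, e2', mul_smul_comm, mul_one]
  -- With every `y` on the left, the two sides differ exactly by the expression `qSerre q x z`.
  rw [← sub_eq_zero, ← hxz]
  match_scalars <;> field_simp <;> ring

/-- The first `q`-Dolan/Grady relation for `x + y` and `z + w`, when `w, x, y, z` is a chain of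
`q`-Weyl pairs and the pairs `(x, z)`, `(y, w)` satisfy the `q`-Serre relation. -/
lemma dolanGrady {q c d : F} (hq : q ≠ 0) (hq2 : q ^ 2 ≠ 1) {x y z w : R}
    (hxy : QWeyl q 1 x y) (hyz : QWeyl q c y z) (hwx : QWeyl q d w x)
    (hxz : qSerre q x z = 0) (hyw : qSerre q y w = 0) :
    qSerre q (x + y) (z + w)
      = ((q ^ 2 - q⁻¹ ^ 2) ^ 2) • ((z + w) * (x + y) - (x + y) * (z + w)) := by
  have hq' : q⁻¹ ≠ 0 := inv_ne_zero hq
  have hq2' : q⁻¹ ^ 2 ≠ 1 := by rwa [inv_pow, ne_eq, inv_eq_one]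
  have h1 := qSerre_add hq hq2 hxy hyz hxz
  have h2 := qSerre_add hq' hq2' hxy.symm hwx.symm (by rwa [qSerre_inv])
  rw [qSerre_inv, inv_inv, add_comm y x] at h2
  rw [qSerre_add_right, h1, h2]
  simp only [mul_add, add_mul]
  module

lemma map_qSerre {S : Type*} [Ring S] [Algebra F S] (f : R →ₐ[F] S) (q : F) (u v : R) :
    f (qSerre q u v) = qSerre q (f u) (f v) := by
  simp [qSerre]

end Algebra

section Box

variable {F : Type*} [Field F] {q : F}

lemma bx_weyl (hq : q ≠ 0) (hq2 : q ^ 2 ≠ 1) (i j : ZMod 4) (hij : i + 1 = j) :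
    QWeyl q 1 (bx F q i) (bx F q j) := by
  subst hij
  have h := RingQuot.mkAlgHom_rel F (BoxRel.weyl (q := q) i)
  simp only [map_smul, map_sub, map_mul, map_one] at h
  rw [inv_smul_eq_iff₀ (sub_inv_ne_zero_of_sq hq hq2)] at h
  rw [QWeyl, mul_one]
  exact h

lemma bx_serre (i j : ZMod 4) (hij : i + 2 = j) : qSerre q (bx F q i) (bx F q j) = 0 := by
  subst hij
  have h := RingQuot.mkAlgHom_rel F (BoxRel.serre (q := q) i)
  rwa [map_qSerre, map_zero] at h

/-- The `q`-Dolan/Grady relation in `□_q` for four cyclically consecutive generators; `i = 0` and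
`i = 2` give the two relations needed. -/
lemma bx_dolanGrady (hq : q ≠ 0) (hq2 : q ^ 2 ≠ 1) {a b : F} (ha : a ≠ 0)
    (i j k l : ZMod 4) (hij : i + 1 = j) (hjk : j + 1 = k) (hkl : k + 1 = l) :
    qSerre q (a • bx F q i + a⁻¹ • bx F q j) (b • bx F q k + b⁻¹ • bx F q l)
      = ((q ^ 2 - q⁻¹ ^ 2) ^ 2) •
        ((b • bx F q k + b⁻¹ • bx F q l) * (a • bx F q i + a⁻¹ • bx F q j)
          - (a • bx F q i + a⁻¹ • bx F q j) * (b • bx F q k + b⁻¹ • bx F q l)) := by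
  have hli : l + 1 = i := by subst hij hjk hkl; clear * -; revert i; decide
  have hik : i + 2 = k := by subst hij hjk; clear * -; revert i; decide
  have hjl : j + 2 = l := by subst hjk hkl; clear * -; revert j; decide
  have h1 := (bx_weyl hq hq2 i j hij).smul a a⁻¹
  rw [mul_inv_cancel₀ ha, one_mul] at h1
  refine dolanGrady hq hq2 h1 ((bx_weyl hq hq2 j k hjk).smul _ _)
    ((bx_weyl hq hq2 l i hli).smul _ _) ?_ ?_
  · rw [qSerre_smul, bx_serre i k hik, smul_zero]
  · rw [qSerre_smul, bx_serre j l hjl, smul_zero]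

end Box

/-- Proposition 5.7: for nonzero `a, b` there is an algebra homomorphism `O_q → □_q`
sending `A ↦ a x₀ + a⁻¹ x₁` and `B ↦ b x₂ + b⁻¹ x₃`. -/
theorem stmt4 (F : Type*) [Field F] (q : F) (hq : q ≠ 0) (hq2 : q ^ 2 ≠ 1)
    (a b : F) (ha : a ≠ 0) (hb : b ≠ 0) :
    ∃ f : Onsager F q →ₐ[F] Box F q,
      f (Ag F q) = a • bx F q 0 + a⁻¹ • bx F q 1 ∧
      f (Bg F q) = b • bx F q 2 + b⁻¹ • bx F q 3 := by
  let g : FreeAlgebra F (Fin 2) →ₐ[F] Box F q := FreeAlgebra.lift F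
    ![a • bx F q 0 + a⁻¹ • bx F q 1, b • bx F q 2 + b⁻¹ • bx F q 3]
  have g0 : g (FreeAlgebra.ι F 0) = a • bx F q 0 + a⁻¹ • bx F q 1 :=
    FreeAlgebra.lift_ι_apply _ _
  have g1 : g (FreeAlgebra.ι F 1) = b • bx F q 2 + b⁻¹ • bx F q 3 :=
    FreeAlgebra.lift_ι_apply _ _
  have hg : ∀ ⦃u v⦄, OnsagerRel F q u v → g u = g v := by
    intro u v h
    cases h with
    | DG1 =>
      rw [map_qSerre, map_smul, map_sub, map_mul, map_mul, g0, g1]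
      exact bx_dolanGrady hq hq2 ha 0 1 2 3 rfl rfl rfl
    | DG2 =>
      rw [map_qSerre, map_smul, map_sub, map_mul, map_mul, g0, g1]
      exact bx_dolanGrady hq hq2 hb 2 3 0 1 rfl rfl rfl
  refine ⟨RingQuot.liftAlgHom F ⟨g, hg⟩, ?_, ?_⟩
  · rw [Ag, RingQuot.liftAlgHom_mkAlgHom_apply, g0]
  · rw [Bg, RingQuot.liftAlgHom_mkAlgHom_apply, g1]
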